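/- arXiv:math/0306390 — 3 statements merged into one kernel-verified Lean document; each statement's English description precedes it below -/
import Mathlib

section
/- Let U be an open subset of ℝ⁴ and let B denote the complex-bilinear extension to ℂ⁴ of the Minkowski inner product: B(u,v) = −u₀v₀ + u₁v₁ + u₂v₂ + u₃v₃ for u, v ∈ ℂ⁴. For a differentiable map F on U and ζ = a + ib with a, b ∈ ℝ⁴, write D_ζF(x) = (DF)_x(a) + i·(DF)_x(b) (the Fréchet derivative extended complex-linearly). Let w : U → ℝ⁴ be C², Z : U → ℂ⁴ be C¹, and λ : U → ℂ be such that for all x ∈ U: (a) B(w(x), w(x)) = 0; (b) (Dw)_x(w(x)) = 0; (c) D_{w(x)}Z(x) − D_{Z(x)}w(x) = λ(x)·w(x) (with w(x) viewed in ℂ⁴). Define h : U → ℂ by h(x) = B(D_{Z(x)}w(x), Z(x)). Then for every x ∈ U, (Dh)_x(w(x)) = B(D_{Z(x)}w(x), D_{Z(x)}w(x)). -/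
noncomputable section

/-- Complexification of a vector of `ℝ⁴`, viewed in `ℂ⁴`. -/
def cx (u : Fin 4 → ℝ) : Fin 4 → ℂ := fun i => (u i : ℂ)

/-- The complex-bilinear extension to `ℂ⁴` of the Minkowski inner product:
`B(u,v) = −u₀v₀ + u₁v₁ + u₂v₂ + u₃v₃`. -/
def minkC (u v : Fin 4 → ℂ) : ℂ := -(u 0 * v 0) + u 1 * v 1 + u 2 * v 2 + u 3 * v 3

/-- Directional derivative of an `ℝ⁴`-valued map in a complexified direction `ζ = a + ib`:
`D_ζ w(x) = (Dw)ₓ(a) + i (Dw)ₓ(b)`, viewed in `ℂ⁴`. -/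
def Dc (w : (Fin 4 → ℝ) → (Fin 4 → ℝ)) (ζ : Fin 4 → ℂ) (x : Fin 4 → ℝ) : Fin 4 → ℂ :=
  cx (fderiv ℝ w x (fun i => (ζ i).re)) + Complex.I • cx (fderiv ℝ w x (fun i => (ζ i).im))

/-! The flat connection satisfies `D_w D_Z w = D_Z D_w w + D_[w,Z] w`. Both terms vanish since
`D_w w = 0` and `[w, Z] = λ w`. Hence `D_w h = B(D_Z w, D_w Z) = B(D_Z w, D_Z w) + λ B(D_Z w, w)`,
and `B(D_Z w, w) = 0` by differentiating the constant `B(w, w)`. -/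

open Filter Topology VectorField

section NormedSpace

variable {𝕜 E F G : Type*} [NontriviallyNormedField 𝕜] [NormedAddCommGroup E] [NormedSpace 𝕜 E]
  [NormedAddCommGroup F] [NormedSpace 𝕜 F] [NormedAddCommGroup G] [NormedSpace 𝕜 G] {x : E}

theorem fderiv_apply_lieBracket {f : E → F} {V W : E → E}
    (hf : DifferentiableAt 𝕜 (fderiv 𝕜 f) x) (hsymm : IsSymmSndFDerivAt 𝕜 f x)
    (hV : DifferentiableAt 𝕜 V x) (hW : DifferentiableAt 𝕜 W x) :
    fderiv 𝕜 f x (lieBracket 𝕜 V W x) =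
      fderiv 𝕜 (fun y ↦ fderiv 𝕜 f y (W y)) x (V x) -
        fderiv 𝕜 (fun y ↦ fderiv 𝕜 f y (V y)) x (W x) := by
  simp [fderiv_clm_apply hf hV, fderiv_clm_apply hf hW, lieBracket, hsymm.eq (W x) (V x)]

theorem fderiv_fderiv_apply_eq_zero_of_lieBracket_eq_smul {w X : E → E} {a : 𝕜}
    (hw₁ : DifferentiableAt 𝕜 w x) (hw₂ : DifferentiableAt 𝕜 (fderiv 𝕜 w) x)
    (hsymm : IsSymmSndFDerivAt 𝕜 w x) (hX : DifferentiableAt 𝕜 X x)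
    (hgeo : ∀ᶠ y in 𝓝 x, fderiv 𝕜 w y (w y) = 0)
    (hbracket : lieBracket 𝕜 w X x = a • w x) :
    fderiv 𝕜 (fun y ↦ fderiv 𝕜 w y (X y)) x (w x) = 0 := by
  have hgeo' : fderiv 𝕜 (fun y ↦ fderiv 𝕜 w y (w y)) x = 0 := by
    rw [EventuallyEq.fderiv_eq (f₁ := fun y ↦ fderiv 𝕜 w y (w y)) hgeo, fderiv_const_apply]
  calc fderiv 𝕜 (fun y ↦ fderiv 𝕜 w y (X y)) x (w x)
      = fderiv 𝕜 w x (lieBracket 𝕜 w X x) := by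
        rw [fderiv_apply_lieBracket hw₂ hsymm hw₁ hX, hgeo', zero_apply, sub_zero]
    _ = 0 := by rw [hbracket, map_smul, hgeo.self_of_nhds, smul_zero]

theorem fderiv_clm_comp_apply (L : F →L[𝕜] G) {f : E → F} (hf : DifferentiableAt 𝕜 f x) (v : E) :
    fderiv 𝕜 (fun y ↦ L (f y)) x v = L (fderiv 𝕜 f x v) := by
  rw [fderiv_fun_comp x L.differentiableAt hf, L.fderiv, ContinuousLinearMap.comp_apply]

theorem fderiv_bilinear_apply {H : Type*} [NormedAddCommGroup H] [NormedSpace 𝕜 H]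
    (B : F →L[𝕜] H →L[𝕜] G) {f : E → F} {g : E → H}
    (hf : DifferentiableAt 𝕜 f x) (hg : DifferentiableAt 𝕜 g x) (v : E) :
    fderiv 𝕜 (fun y ↦ B (f y) (g y)) x v =
      B (f x) (fderiv 𝕜 g x v) + B (fderiv 𝕜 f x v) (g x) := by
  simp [B.fderiv_of_bilinear hf hg]

theorem bilinear_fderiv_apply_eq_zero_of_eventually_const [NeZero (2 : 𝕜)]
    {B : F →L[𝕜] F →L[𝕜] G} (hB : ∀ u v, B u v = B v u) {f : E → F} {c : G}
    (hf : DifferentiableAt 𝕜 f x) (hconst : ∀ᶠ y in 𝓝 x, B (f y) (f y) = c) (v : E) :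
    B (fderiv 𝕜 f x v) (f x) = 0 := by
  have htwice : (2 : 𝕜) • B (fderiv 𝕜 f x v) (f x) = 0 := calc
    (2 : 𝕜) • B (fderiv 𝕜 f x v) (f x)
      = fderiv 𝕜 (fun y ↦ B (f y) (f y)) x v := by
        rw [fderiv_bilinear_apply B hf hf, hB (f x), two_smul]
    _ = 0 := by
        rw [EventuallyEq.fderiv_eq (f₁ := fun y ↦ B (f y) (f y)) hconst, fderiv_const_apply,
          zero_apply]
  exact (smul_eq_zero_iff_right two_ne_zero).1 htwice

end NormedSpace

section Complexification

variable {ι κ : Type*}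

/-- The inclusion `ℝ^ι → ℂ^ι` as a continuous real-linear map. -/
def complexify : (ι → ℝ) →L[ℝ] (ι → ℂ) := .piMap fun _ ↦ Complex.ofRealCLM

/-- The coordinatewise real part `ℂ^ι → ℝ^ι` as a continuous real-linear map. -/
def rePart : (ι → ℂ) →L[ℝ] (ι → ℝ) := .piMap fun _ ↦ Complex.reCLM

/-- The coordinatewise imaginary part `ℂ^ι → ℝ^ι` as a continuous real-linear map. -/
def imPart : (ι → ℂ) →L[ℝ] (ι → ℝ) := .piMap fun _ ↦ Complex.imCLM

theorem rePart_smul_complexify (c : ℂ) (u : ι → ℝ) : rePart (c • complexify u) = c.re • u := by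
  ext i; simp [rePart, complexify]

theorem imPart_smul_complexify (c : ℂ) (u : ι → ℝ) : imPart (c • complexify u) = c.im • u := by
  ext i; simp [imPart, complexify]

/-- The derivative of `w : ℝ^ι → ℝ^κ` at `x` in the complexified direction `ζ`, obtained by
extending the Fréchet derivative complex-linearly; for `ι = κ = Fin 4` this is `Dc w ζ x`
definitionally. -/
def complexDirDeriv (w : (ι → ℝ) → (κ → ℝ)) (ζ : ι → ℂ) (x : ι → ℝ) : κ → ℂ :=
  complexify (fderiv ℝ w x (rePart ζ)) + Complex.I • complexify (fderiv ℝ w x (imPart ζ))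

theorem rePart_complexDirDeriv (w : (ι → ℝ) → (κ → ℝ)) (ζ : ι → ℂ) (x : ι → ℝ) :
    rePart (complexDirDeriv w ζ x) = fderiv ℝ w x (rePart ζ) := by
  ext i; simp [complexDirDeriv, rePart, complexify]

theorem imPart_complexDirDeriv (w : (ι → ℝ) → (κ → ℝ)) (ζ : ι → ℂ) (x : ι → ℝ) :
    imPart (complexDirDeriv w ζ x) = fderiv ℝ w x (imPart ζ) := by
  ext i; simp [complexDirDeriv, imPart, complexify]

variable {f : (ι → ℝ) → (κ → ℝ)} {w : (ι → ℝ) → (ι → ℝ)} {Z : (ι → ℝ) → (ι → ℂ)} {x : ι → ℝ}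
  {c : ℂ}

theorem differentiableAt_complexDirDeriv [Finite ι] [Finite κ]
    (hf : DifferentiableAt ℝ (fderiv ℝ f) x) (hZ : DifferentiableAt ℝ Z x) :
    DifferentiableAt ℝ (fun y ↦ complexDirDeriv f (Z y) y) x := by
  have := Fintype.ofFinite ι
  have := Fintype.ofFinite κ
  unfold complexDirDeriv
  fun_prop

theorem fderiv_complexDirDeriv_apply [Finite ι] [Finite κ]
    (hf : DifferentiableAt ℝ (fderiv ℝ f) x) (hZ : DifferentiableAt ℝ Z x) (v : ι → ℝ) :
    fderiv ℝ (fun y ↦ complexDirDeriv f (Z y) y) x v =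
      complexify (fderiv ℝ (fun y ↦ fderiv ℝ f y (rePart (Z y))) x v) +
        Complex.I • complexify (fderiv ℝ (fun y ↦ fderiv ℝ f y (imPart (Z y))) x v) := by
  have := Fintype.ofFinite ι
  have := Fintype.ofFinite κ
  have hre : DifferentiableAt ℝ (fun y ↦ fderiv ℝ f y (rePart (Z y))) x := by fun_prop
  have him : DifferentiableAt ℝ (fun y ↦ fderiv ℝ f y (imPart (Z y))) x := by fun_prop
  unfold complexDirDeriv
  rw [fderiv_fun_add (by fun_prop) (by fun_prop), fderiv_fun_const_smul (by fun_prop),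
    add_apply, smul_apply, fderiv_clm_comp_apply complexify hre,
    fderiv_clm_comp_apply complexify him]

theorem bilinear_complexDirDeriv_eq_zero_of_eventually_const [Finite ι] [Finite κ]
    {B : (κ → ℂ) →L[ℂ] (κ → ℂ) →L[ℂ] ℂ} (hB : ∀ u v, B u v = B v u) {k : ℂ}
    (hf : DifferentiableAt ℝ f x)
    (hconst : ∀ᶠ y in 𝓝 x, B (complexify (f y)) (complexify (f y)) = k)
    (ζ : ι → ℂ) : B (complexDirDeriv f ζ x) (complexify (f x)) = 0 := by
  have := Fintype.ofFinite ι
  have := Fintype.ofFinite κ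
  have hreal (v : ι → ℝ) : B (complexify (fderiv ℝ f x v)) (complexify (f x)) = 0 := by
    rw [← fderiv_clm_comp_apply complexify hf]
    exact bilinear_fderiv_apply_eq_zero_of_eventually_const (B := B.bilinearRestrictScalars ℝ)
      hB (f := fun y ↦ complexify (f y)) (by fun_prop) hconst v
  simp only [complexDirDeriv, map_add, map_smul, add_apply, smul_apply, hreal, smul_zero, add_zero]

variable [Fintype ι]

theorem lieBracket_rePart (hZ : DifferentiableAt ℝ Z x)
    (hbasic : fderiv ℝ Z x (w x) - complexDirDeriv w (Z x) x = c • complexify (w x)) :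
    lieBracket ℝ w (fun y ↦ rePart (Z y)) x = c.re • w x := by
  rw [lieBracket, fderiv_clm_comp_apply rePart hZ, ← rePart_complexDirDeriv, ← map_sub, hbasic,
    rePart_smul_complexify]

theorem lieBracket_imPart (hZ : DifferentiableAt ℝ Z x)
    (hbasic : fderiv ℝ Z x (w x) - complexDirDeriv w (Z x) x = c • complexify (w x)) :
    lieBracket ℝ w (fun y ↦ imPart (Z y)) x = c.im • w x := by
  rw [lieBracket, fderiv_clm_comp_apply imPart hZ, ← imPart_complexDirDeriv, ← map_sub, hbasic,
    imPart_smul_complexify]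

theorem fderiv_complexDirDeriv_apply_eq_zero (hw : ContDiffAt ℝ 2 w x)
    (hZ : DifferentiableAt ℝ Z x) (hgeo : ∀ᶠ y in 𝓝 x, fderiv ℝ w y (w y) = 0)
    (hbasic : fderiv ℝ Z x (w x) - complexDirDeriv w (Z x) x = c • complexify (w x)) :
    fderiv ℝ (fun y ↦ complexDirDeriv w (Z y) y) x (w x) = 0 := by
  have hw₁ : DifferentiableAt ℝ w x := hw.differentiableAt two_ne_zero
  have hw₂ : DifferentiableAt ℝ (fderiv ℝ w) x :=
    (hw.fderiv_right (m := 1) le_rfl).differentiableAt one_ne_zero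
  have hsymm : IsSymmSndFDerivAt ℝ w x := hw.isSymmSndFDerivAt (by simp)
  have hre : fderiv ℝ (fun y ↦ fderiv ℝ w y (rePart (Z y))) x (w x) = 0 :=
    fderiv_fderiv_apply_eq_zero_of_lieBracket_eq_smul hw₁ hw₂ hsymm (by fun_prop) hgeo
      (lieBracket_rePart hZ hbasic)
  have him : fderiv ℝ (fun y ↦ fderiv ℝ w y (imPart (Z y))) x (w x) = 0 :=
    fderiv_fderiv_apply_eq_zero_of_lieBracket_eq_smul hw₁ hw₂ hsymm (by fun_prop) hgeo
      (lieBracket_imPart hZ hbasic)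
  rw [fderiv_complexDirDeriv_apply hw₂ hZ, hre, him, map_zero, smul_zero, add_zero]

theorem shear_free_propagation_general {B : (ι → ℂ) →L[ℂ] (ι → ℂ) →L[ℂ] ℂ}
    (hB : ∀ u v, B u v = B v u) {k : ℂ} (hw : ContDiffAt ℝ 2 w x) (hZ : DifferentiableAt ℝ Z x)
    (hconst : ∀ᶠ y in 𝓝 x, B (complexify (w y)) (complexify (w y)) = k)
    (hgeo : ∀ᶠ y in 𝓝 x, fderiv ℝ w y (w y) = 0)
    (hbasic : fderiv ℝ Z x (w x) - complexDirDeriv w (Z x) x = c • complexify (w x)) :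
    fderiv ℝ (fun y ↦ B (complexDirDeriv w (Z y) y) (Z y)) x (w x) =
      B (complexDirDeriv w (Z x) x) (complexDirDeriv w (Z x) x) := by
  have hw₁ : DifferentiableAt ℝ w x := hw.differentiableAt two_ne_zero
  have hw₂ : DifferentiableAt ℝ (fderiv ℝ w) x :=
    (hw.fderiv_right (m := 1) le_rfl).differentiableAt one_ne_zero
  set S : (ι → ℝ) → (ι → ℂ) := fun y ↦ complexDirDeriv w (Z y) y
  calc fderiv ℝ (fun y ↦ B (S y) (Z y)) x (w x)
      = B (S x) (fderiv ℝ Z x (w x)) + B (fderiv ℝ S x (w x)) (Z x) :=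
        fderiv_bilinear_apply (B.bilinearRestrictScalars ℝ)
          (differentiableAt_complexDirDeriv hw₂ hZ) hZ (w x)
    _ = B (S x) (S x + c • complexify (w x)) := by
        rw [fderiv_complexDirDeriv_apply_eq_zero hw hZ hgeo hbasic, map_zero, zero_apply, add_zero,
          sub_eq_iff_eq_add'.1 hbasic]
    _ = B (S x) (S x) := by
        rw [map_add, map_smul, bilinear_complexDirDeriv_eq_zero_of_eventually_const hB hw₁ hconst,
          smul_zero, add_zero]

end Complexification

theorem isBilinearMap_minkC : IsBilinearMap ℂ minkC where
  add_left _ _ _ := by simp only [minkC, Pi.add_apply]; ring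
  smul_left _ _ _ := by simp only [minkC, Pi.smul_apply, smul_eq_mul]; ring
  add_right _ _ _ := by simp only [minkC, Pi.add_apply]; ring
  smul_right _ _ _ := by simp only [minkC, Pi.smul_apply, smul_eq_mul]; ring

theorem minkC_comm (u v : Fin 4 → ℂ) : minkC u v = minkC v u := by
  simp only [minkC, mul_comm]

/-- The key computation in Lemma 3.2: for a null geodesic field `w` and a basic complexified
screen field `Z`, the derivative of `h = B(D_Z w, Z)` along `w` equals `B(D_Z w, D_Z w)`. -/
theorem shear_free_propagation
    (U : Set (Fin 4 → ℝ)) (hU : IsOpen U)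
    (w : (Fin 4 → ℝ) → (Fin 4 → ℝ)) (hw : ContDiffOn ℝ 2 w U)
    (Z : (Fin 4 → ℝ) → (Fin 4 → ℂ)) (hZ : ContDiffOn ℝ 1 Z U)
    (lam : (Fin 4 → ℝ) → ℂ)
    (hnull : ∀ x ∈ U, minkC (cx (w x)) (cx (w x)) = 0)
    (hgeo : ∀ x ∈ U, fderiv ℝ w x (w x) = 0)
    (hbasic : ∀ x ∈ U, fderiv ℝ Z x (w x) - Dc w (Z x) x = lam x • cx (w x)) :
    ∀ x ∈ U,
      fderiv ℝ (fun y => minkC (Dc w (Z y) y) (Z y)) x (w x) =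
        minkC (Dc w (Z x) x) (Dc w (Z x) x) := by
  intro x hx
  have hUx : U ∈ 𝓝 x := hU.mem_nhds hx
  exact shear_free_propagation_general (B := isBilinearMap_minkC.toContinuousBilinearMap) minkC_comm
    (hw.contDiffAt hUx) ((hZ.contDiffAt hUx).differentiableAt one_ne_zero)
    (eventually_of_mem hUx hnull) (eventually_of_mem hUx hgeo) (hbasic x hx)

end
end

section
/- Let A be an open subset of ℂ⁴ (complex coordinates (z₀,z₁,z₂,z₃)) and let μ : A → ℂ be holomorphic, satisfying on A the equations ∂_{q̃₁}μ − μ·∂_{q₂}μ = 0 and ∂_{q̃₂}μ + μ·∂_{q₁}μ = 0, where ∂_{q₁} = ½(∂_{z₀} − i∂_{z₁}), ∂_{q̃₁} = ½(∂_{z₀} + i∂_{z₁}), ∂_{q₂} = ½(∂_{z₂} − i∂_{z₃}), ∂_{q̃₂} = ½(∂_{z₂} + i∂_{z₃}). Then on A: ∑ᵢ₌₀³ ∂²μ/∂zᵢ² = 0 and ∑ᵢ₌₀³ (∂μ/∂zᵢ)² = 0; that is, μ is a complex-harmonic morphism. -/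
/-!
The vectors `p = ½(e₀ - i e₁)`, `p' = ½(e₀ + i e₁)`, `q = ½(e₂ - i e₃)`, `q' = ½(e₂ + i e₃)` satisfy
`∑ᵢ B(eᵢ, eᵢ) = 4 (B(p, p') + B(q, q'))` for every symmetric bilinear `B`. For the Hessian of `μ`,
substituting `∂_{p'}μ = μ ∂_q μ` and `∂_{q'}μ = -μ ∂_p μ` turns the right-hand side into
`4 (∂_p (μ ∂_q μ) - ∂_q (μ ∂_p μ))`, which vanishes because `∂_p ∂_q μ = ∂_q ∂_p μ`; for
`B(u, v) = ∂_u μ ∂_v μ` the two terms cancel at once.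

The second derivative exists and is symmetric because `μ` is holomorphic. On a normed space this
follows from the Cauchy estimate on balls: it makes `μ'` locally Lipschitz, so the difference
quotients of `μ` converge locally uniformly to the directional derivatives, which are therefore
holomorphic; applied to the first-order Taylor remainder `z ↦ μ (z + h) - μ z - μ' z h`, it bounds
the remainder of `μ'` by a multiple of `‖h‖²`.
-/

noncomputable section

/-- Complex partial derivative in the `i`-th coordinate direction of a map `ℂ⁴ → ℂ`. -/
def pdC (i : Fin 4) (f : (Fin 4 → ℂ) → ℂ) (z : Fin 4 → ℂ) : ℂ :=
  fderiv ℂ f z (Pi.single i 1)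

open Complex Filter Metric Set Topology
open scoped NNReal

section NontriviallyNormedField

variable {𝕜 E F : Type*} [NontriviallyNormedField 𝕜] [NormedAddCommGroup E] [NormedSpace 𝕜 E]
  [NormedAddCommGroup F] [NormedSpace 𝕜 F] {f : E → F} {s : Set E} {z : E} {K : ℝ≥0}

theorem add_mem_ball_add {c x h : E} {r δ : ℝ} (hx : x ∈ ball c r) (hh : ‖h‖ < δ) :
    x + h ∈ ball c (r + δ) := by
  rw [mem_ball, dist_eq_norm] at hx ⊢
  rw [add_sub_right_comm]
  exact (norm_add_le _ _).trans_lt (add_lt_add hx hh)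

theorem eventually_forall_mem_ball_add_smul_mem_ball (c : E) (r : ℝ) {δ : ℝ} (hδ : 0 < δ) (v : E) :
    ∀ᶠ t : 𝕜 in 𝓝 0, ∀ x ∈ ball c r, x + t • v ∈ ball c (r + δ) := by
  have hcont : Continuous fun t : 𝕜 ↦ ‖t • v‖ := by fun_prop
  filter_upwards [hcont.continuousAt.eventually_lt_const (by simpa using hδ)] with t ht x hx
  exact add_mem_ball_add hx ht

theorem exists_clm_eq_fderiv_fderiv_apply (hs : s ∈ 𝓝 z) (hK : LipschitzOnWith K (fderiv 𝕜 f) s)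
    (hf : ∀ h, DifferentiableAt 𝕜 (fun w ↦ fderiv 𝕜 f w h) z) :
    ∃ B : E →L[𝕜] E →L[𝕜] F, ∀ h, B h = fderiv 𝕜 (fun w ↦ fderiv 𝕜 f w h) z := by
  let B : E →ₗ[𝕜] E →L[𝕜] F :=
    { toFun h := fderiv 𝕜 (fun w ↦ fderiv 𝕜 f w h) z
      map_add' h k := by
        simp only [map_add]
        exact fderiv_fun_add (hf h) (hf k)
      map_smul' a h := by
        simp only [map_smul, RingHom.id_apply]
        exact fderiv_fun_const_smul (hf h) a }
  refine ⟨B.mkContinuous K fun h ↦ ?_, fun h ↦ rfl⟩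
  have hlip : LipschitzOnWith (K * ‖h‖₊) (fun w ↦ fderiv 𝕜 f w h) s := by
    refine LipschitzOnWith.of_dist_le_mul fun x hx y hy ↦ ?_
    rw [dist_eq_norm, dist_eq_norm x y, ← sub_apply, NNReal.coe_mul, coe_nnnorm, mul_right_comm]
    exact (fderiv 𝕜 f x - fderiv 𝕜 f y).le_of_opNorm_le (hK.norm_sub_le hx hy) h
  exact_mod_cast norm_fderiv_le_of_lipschitzOn 𝕜 hs hlip

theorem fderiv_fderiv_apply_const (hf : DifferentiableAt 𝕜 (fderiv 𝕜 f) z) (u v : E) :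
    fderiv 𝕜 (fun w ↦ fderiv 𝕜 f w v) z u = fderiv 𝕜 (fderiv 𝕜 f) z u v := by
  simp [fderiv_clm_apply hf (differentiableAt_const v)]

theorem fderiv_fderiv_add_eq_zero_of_eventually_eq_mul {𝔸 : Type*} [NormedCommRing 𝔸]
    [NormedAlgebra 𝕜 𝔸] {f : E → 𝔸}
    (hf : DifferentiableAt 𝕜 f z) (hf' : DifferentiableAt 𝕜 (fderiv 𝕜 f) z)
    (hsymm : IsSymmSndFDerivAt 𝕜 f z) {p p' q q' : E}
    (hp : ∀ᶠ w in 𝓝 z, fderiv 𝕜 f w p' = f w * fderiv 𝕜 f w q)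
    (hq : ∀ᶠ w in 𝓝 z, fderiv 𝕜 f w q' = -(f w * fderiv 𝕜 f w p)) :
    fderiv 𝕜 (fderiv 𝕜 f) z p p' + fderiv 𝕜 (fderiv 𝕜 f) z q q' = 0 := by
  have hD (u : E) : DifferentiableAt 𝕜 (fun w ↦ fderiv 𝕜 f w u) z :=
    hf'.clm_apply (differentiableAt_const u)
  have hpp' : fderiv 𝕜 (fderiv 𝕜 f) z p p' =
      f z * fderiv 𝕜 (fderiv 𝕜 f) z p q + fderiv 𝕜 f z p * fderiv 𝕜 f z q := by
    rw [← fderiv_fderiv_apply_const hf', EventuallyEq.fderiv_eq hp, fderiv_fun_mul hf (hD q)]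
    simp [fderiv_fderiv_apply_const hf', mul_comm]
  have hqq' : fderiv 𝕜 (fderiv 𝕜 f) z q q' =
      -(f z * fderiv 𝕜 (fderiv 𝕜 f) z q p + fderiv 𝕜 f z q * fderiv 𝕜 f z p) := by
    rw [← fderiv_fderiv_apply_const hf', EventuallyEq.fderiv_eq hq, fderiv_fun_neg,
      fderiv_fun_mul hf (hD p)]
    simp [fderiv_fderiv_apply_const hf', mul_comm]
  rw [hpp', hqq', hsymm.eq q p]
  ring

end NontriviallyNormedField

section SecondDerivative

variable {𝕜 E F : Type*} [RCLike 𝕜] [NormedAddCommGroup E] [NormedSpace 𝕜 E]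
  [NormedAddCommGroup F] [NormedSpace 𝕜 F] {f : E → F} {s : Set E} {K : ℝ≥0}

theorem norm_sub_sub_fderiv_le_of_lipschitzOnWith_fderiv [NormedSpace ℝ E] (hs : Convex ℝ s)
    (hf : ∀ x ∈ s, DifferentiableAt 𝕜 f x) (hK : LipschitzOnWith K (fderiv 𝕜 f) s)
    {x h : E} (hx : x ∈ s) (hxh : x + h ∈ s) :
    ‖f (x + h) - f x - fderiv 𝕜 f x h‖ ≤ K * ‖h‖ ^ 2 := by
  have hseg : segment ℝ x (x + h) ⊆ s := hs.segment_subset hx hxh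
  have hbound : ∀ y ∈ segment ℝ x (x + h), ‖fderiv 𝕜 f y - fderiv 𝕜 f x‖ ≤ K * ‖h‖ := by
    intro y hy
    calc ‖fderiv 𝕜 f y - fderiv 𝕜 f x‖ ≤ K * ‖y - x‖ := hK.norm_sub_le (hseg hy) hx
      _ ≤ K * ‖h‖ := by
        gcongr
        simpa using norm_sub_le_of_mem_segment hy
  have hmvt := (convex_segment x (x + h)).norm_image_sub_le_of_norm_fderiv_le'
    (fun y hy ↦ hf y (hseg hy)) hbound (left_mem_segment ℝ x (x + h))
    (right_mem_segment ℝ x (x + h))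
  rw [add_sub_cancel_left] at hmvt
  linarith

theorem tendstoUniformlyOn_smul_sub_fderiv_apply {c : E} {r δ : ℝ} (hδ : 0 < δ)
    (hf : ∀ x ∈ ball c (r + δ), DifferentiableAt 𝕜 f x)
    (hK : LipschitzOnWith K (fderiv 𝕜 f) (ball c (r + δ))) (v : E) :
    TendstoUniformlyOn (fun (t : 𝕜) z ↦ t⁻¹ • (f (z + t • v) - f z))
      (fun z ↦ fderiv 𝕜 f z v) (𝓝[≠] 0) (ball c r) := by
  let _ : NormedSpace ℝ E := NormedSpace.restrictScalars ℝ 𝕜 E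
  have hbound : Tendsto (fun t : 𝕜 ↦ K * ‖t • v‖ * ‖v‖) (𝓝[≠] 0) (𝓝 0) := by
    have hcont : Continuous fun t : 𝕜 ↦ K * ‖t • v‖ * ‖v‖ := by fun_prop
    simpa using (hcont.tendsto 0).mono_left nhdsWithin_le_nhds
  rw [Metric.tendstoUniformlyOn_iff]
  intro ε hε
  filter_upwards [nhdsWithin_le_nhds (eventually_forall_mem_ball_add_smul_mem_ball c r hδ v),
    eventually_mem_nhdsWithin, hbound.eventually_lt_const hε] with t htmem (ht : t ≠ 0) htε z hz
  calc dist (fderiv 𝕜 f z v) (t⁻¹ • (f (z + t • v) - f z))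
      = ‖t‖⁻¹ * ‖f (z + t • v) - f z - fderiv 𝕜 f z (t • v)‖ := by
        rw [dist_comm, dist_eq_norm, ← norm_inv, ← norm_smul, smul_sub _ _ (fderiv 𝕜 f z _),
          map_smul, inv_smul_smul₀ ht]
    _ ≤ ‖t‖⁻¹ * (K * ‖t • v‖ ^ 2) := by
        gcongr
        exact norm_sub_sub_fderiv_le_of_lipschitzOnWith_fderiv (convex_ball c (r + δ)) hf hK
          (ball_subset_ball (by linarith) hz) (htmem z hz)
    _ = K * ‖t • v‖ * ‖v‖ := by
        have := norm_ne_zero_iff.2 ht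
        rw [norm_smul]
        field
    _ < ε := htε

end SecondDerivative

section Holomorphic

variable {E F ι : Type*} [NormedAddCommGroup E] [NormedSpace ℂ E] [NormedAddCommGroup F]
  [NormedSpace ℂ F] {f : E → F} {U : Set E} {c : E} {r M : ℝ}

theorem norm_fderiv_le_of_forall_mem_ball_norm_le (hr : 0 < r)
    (hf : DifferentiableOn ℂ f (ball c r)) (hM : ∀ z ∈ ball c r, ‖f z‖ ≤ M) :
    ‖fderiv ℂ f c‖ ≤ 2 * M / r := by
  refine norm_fderiv_le_div_of_mapsTo_ball hf (fun z hz ↦ ?_) hr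
  rw [mem_closedBall, dist_eq_norm]
  linarith [norm_sub_le (f z) (f c), hM z hz, hM c (mem_ball_self hr)]

theorem uniformCauchySeqOn_fderiv_ball {φ : Filter ι} {G : ι → E → F} {s : ℝ} (hr : 0 < r)
    (hG : ∀ᶠ n in φ, DifferentiableOn ℂ (G n) (ball c (s + r)))
    (hcauchy : UniformCauchySeqOn G φ (ball c (s + r))) :
    UniformCauchySeqOn (fun n ↦ fderiv ℂ (G n)) φ (ball c s) := by
  rw [SeminormedAddGroup.uniformCauchySeqOn_iff_tendstoUniformlyOn_zero,
    Metric.tendstoUniformlyOn_iff] at hcauchy ⊢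
  intro ε hε
  filter_upwards [hcauchy (ε * r / 4) (by positivity), hG.prod_mk hG]
    with ⟨m, n⟩ hclose ⟨hm, hn⟩ w hw
  simp only [Pi.zero_apply, dist_zero_left, norm_neg_add] at hclose ⊢
  have hsub : ball w r ⊆ ball c (s + r) := ball_subset_ball' (by linarith [mem_ball.1 hw])
  have hwmem := isOpen_ball.mem_nhds (hsub (mem_ball_self hr))
  rw [← fderiv_fun_sub (hm.differentiableAt hwmem) (hn.differentiableAt hwmem)]
  calc _ ≤ 2 * (ε * r / 4) / r := norm_fderiv_le_of_forall_mem_ball_norm_le hr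
        ((hm.sub hn).mono hsub) fun z hz ↦ (hclose z (hsub hz)).le
    _ = ε / 2 := by field
    _ < ε := half_lt_self hε

theorem differentiableOn_of_tendstoUniformlyOn [CompleteSpace F] {φ : Filter ι} [φ.NeBot]
    {G : ι → E → F} (hU : IsOpen U) (hG : ∀ᶠ n in φ, DifferentiableOn ℂ (G n) U)
    (hlim : TendstoUniformlyOn G f φ U) : DifferentiableOn ℂ f U := by
  intro c hc
  obtain ⟨ε, hε, hεU⟩ := Metric.isOpen_iff.1 hU c hc
  rw [← add_halves ε] at hεU
  have hcauchy : UniformCauchySeqOn (fun n ↦ fderiv ℂ (G n)) φ (ball c (ε / 2)) :=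
    uniformCauchySeqOn_fderiv_ball (half_pos hε) (hG.mono fun n hn ↦ hn.mono hεU)
      (hlim.mono hεU).uniformCauchySeqOn
  choose! L hL using fun z (hz : z ∈ ball c (ε / 2)) ↦
    cauchy_map_iff_exists_tendsto.1 (hcauchy.cauchy_map hz)
  have hball : ball c (ε / 2) ∈ 𝓝 c := ball_mem_nhds c (half_pos hε)
  have hGderiv : ∀ᶠ p : ι × E in φ ×ˢ 𝓝 c, HasFDerivAt (G p.1) (fderiv ℂ (G p.1) p.2) p.2 :=
    (hG.prod_mk (hU.mem_nhds hc)).mono fun p hp ↦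
      (hp.1.differentiableAt (hU.mem_nhds hp.2)).hasFDerivAt
  refine (hasFDerivAt_of_tendstoUniformlyOnFilter (f' := fun n ↦ fderiv ℂ (G n)) (g' := L)
    ?_ hGderiv ?_).differentiableAt.differentiableWithinAt
  · exact (hcauchy.tendstoUniformlyOn_of_tendsto hL).tendstoUniformlyOnFilter.mono_right
      (le_principal_iff.2 hball)
  · filter_upwards [hU.mem_nhds hc] with z hz using hlim.tendsto_at hz

theorem exists_ball_lipschitzOnWith (hU : IsOpen U) (hf : DifferentiableOn ℂ f U) (hc : c ∈ U) :
    ∃ r > 0, ball c r ⊆ U ∧ ∃ K, LipschitzOnWith K f (ball c r) := by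
  have hev : ∀ᶠ z in 𝓝 c, z ∈ U ∧ f z ∈ ball (f c) 1 :=
    Eventually.and (hU.mem_nhds hc) <|
      (hf.differentiableAt (hU.mem_nhds hc)).continuousAt.eventually_mem (ball_mem_nhds _ one_pos)
  obtain ⟨ε, hε, hball⟩ := Metric.eventually_nhds_iff_ball.1 hev
  refine ⟨ε / 3, by positivity, fun z hz ↦ (hball z (ball_subset_ball (by linarith) hz)).1,
    ⟨2 / (2 * ε / 3), by positivity⟩, LipschitzOnWith.of_dist_le_mul fun z hz w hw ↦ ?_⟩
  have hsub : ball w (2 * ε / 3) ⊆ ball c ε :=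
    ball_subset_ball' (by linarith [mem_ball.1 hw])
  refine dist_le_div_mul_dist_of_mapsTo_ball
    (fun x hx ↦ (hf x (hball x (hsub hx)).1).mono fun y hy ↦ (hball y (hsub hy)).1)
    (fun x hx ↦ ?_) ?_
  · have hx' := mem_ball.1 (hball x (hsub hx)).2
    have hw' := mem_ball.1 (hball w (hsub (mem_ball_self (by positivity)))).2
    exact mem_closedBall.2 (by linarith [dist_triangle_right (f x) (f w) (f c)])
  · rw [mem_ball] at hz hw ⊢
    linarith [dist_triangle_right z w c]

theorem exists_ball_lipschitzOnWith_fderiv (hU : IsOpen U) (hf : DifferentiableOn ℂ f U)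
    (hc : c ∈ U) : ∃ r > 0, ball c r ⊆ U ∧ ∃ K, LipschitzOnWith K (fderiv ℂ f) (ball c r) := by
  obtain ⟨ε, hε, hεU, K, hK⟩ := exists_ball_lipschitzOnWith hU hf hc
  refine ⟨ε / 2, half_pos hε, (ball_subset_ball (half_le_self hε.le)).trans hεU,
    ⟨2 * K / (ε / 2), by positivity⟩, LipschitzOnWith.of_dist_le_mul fun z hz w hw ↦ ?_⟩
  have hsub {x : E} (hx : x ∈ ball c (ε / 2)) : ball x (ε / 2) ⊆ ball c ε :=
    ball_subset_ball' (by linarith [mem_ball.1 hx])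
  -- Cauchy estimate at `w` for the difference of `f` and its translate by `z - w`, which is small
  -- since `f` is Lipschitz.
  have hshift {x : E} (hx : x ∈ ball w (ε / 2)) : x + (z - w) ∈ ball z (ε / 2) := by
    rw [mem_ball, dist_eq_norm] at hx ⊢
    convert hx using 2
    abel
  have hdiff {x : E} (hx : x ∈ ball c ε) : DifferentiableAt ℂ f x :=
    hf.differentiableAt (hU.mem_nhds (hεU hx))
  have hdiff_shift {x : E} (hx : x ∈ ball w (ε / 2)) :
      DifferentiableAt ℂ (fun x ↦ f (x + (z - w))) x :=
    (differentiableAt_comp_add_right _).2 (hdiff (hsub hz (hshift hx)))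
  have hw' := mem_ball_self (x := w) (half_pos hε)
  calc dist (fderiv ℂ f z) (fderiv ℂ f w)
      = ‖fderiv ℂ (fun x ↦ f (x + (z - w)) - f x) w‖ := by
        rw [fderiv_fun_sub (hdiff_shift hw') (hdiff (hsub hw hw')), fderiv_comp_add_right,
          add_sub_cancel, dist_eq_norm]
    _ ≤ 2 * (K * ‖z - w‖) / (ε / 2) := by
        refine norm_fderiv_le_of_forall_mem_ball_norm_le (half_pos hε)
          (fun x hx ↦ ((hdiff_shift hx).sub (hdiff (hsub hw hx))).differentiableWithinAt)
          fun x hx ↦ ?_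
        simpa using hK.norm_sub_le (hsub hz (hshift hx)) (hsub hw hx)
    _ = 2 * K / (ε / 2) * dist z w := by rw [dist_eq_norm]; ring

theorem differentiableOn_fderiv_apply [CompleteSpace F] (hU : IsOpen U)
    (hf : DifferentiableOn ℂ f U) (v : E) : DifferentiableOn ℂ (fun z ↦ fderiv ℂ f z v) U := by
  intro c hc
  obtain ⟨ε, hε, hεU, K, hK⟩ := exists_ball_lipschitzOnWith_fderiv hU hf hc
  rw [← add_halves ε] at hεU hK
  have hdiff : ∀ z ∈ ball c (ε / 2 + ε / 2), DifferentiableAt ℂ f z := fun z hz ↦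
    hf.differentiableAt (hU.mem_nhds (hεU hz))
  have hquot : ∀ᶠ t : ℂ in 𝓝[≠] 0,
      DifferentiableOn ℂ (fun z ↦ t⁻¹ • (f (z + t • v) - f z)) (ball c (ε / 2)) := by
    filter_upwards [nhdsWithin_le_nhds
      (eventually_forall_mem_ball_add_smul_mem_ball c (ε / 2) (half_pos hε) v)] with t ht z hz
    have hshift := (differentiableAt_comp_add_right (t • v)).2 (hdiff _ (ht z hz))
    exact ((hshift.sub (hdiff z (ball_subset_ball (by linarith) hz))).const_smul
      t⁻¹).differentiableWithinAt
  have hlim := tendstoUniformlyOn_smul_sub_fderiv_apply (half_pos hε) hdiff hK v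
  exact ((differentiableOn_of_tendstoUniformlyOn isOpen_ball hquot hlim).differentiableAt
    (ball_mem_nhds c (half_pos hε))).differentiableWithinAt

theorem norm_fderiv_add_sub_fderiv_sub_le {K : ℝ≥0} {δ : ℝ} {h : E} (hr : 0 < r)
    (hf : DifferentiableOn ℂ f (ball c (r + δ)))
    (hf' : DifferentiableOn ℂ (fun z ↦ fderiv ℂ f z h) (ball c (r + δ)))
    (hK : LipschitzOnWith K (fderiv ℂ f) (ball c (r + δ))) (hh : ‖h‖ < δ) :
    ‖fderiv ℂ f (c + h) - fderiv ℂ f c - fderiv ℂ (fun z ↦ fderiv ℂ f z h) c‖ ≤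
      2 * (K * ‖h‖ ^ 2) / r := by
  have hsub : ball c r ⊆ ball c (r + δ) := ball_subset_ball (by linarith [norm_nonneg h])
  have hdiff : ∀ z ∈ ball c (r + δ), DifferentiableAt ℂ f z := fun z hz ↦
    hf.differentiableAt (isOpen_ball.mem_nhds hz)
  have hshift : ∀ z ∈ ball c r, DifferentiableAt ℂ (fun w ↦ f (w + h)) z := fun z hz ↦
    (differentiableAt_comp_add_right h).2 (hdiff _ (add_mem_ball_add hz hh))
  have hdir : ∀ z ∈ ball c r, DifferentiableAt ℂ (fun w ↦ fderiv ℂ f w h) z := fun z hz ↦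
    hf'.differentiableAt (isOpen_ball.mem_nhds (hsub hz))
  have hc : c ∈ ball c r := mem_ball_self hr
  rw [← fderiv_comp_add_right h, ← fderiv_fun_sub (hshift c hc) (hdiff c (hsub hc)),
    ← fderiv_fun_sub ((hshift c hc).fun_sub (hdiff c (hsub hc))) (hdir c hc)]
  refine norm_fderiv_le_of_forall_mem_ball_norm_le hr
    (fun z hz ↦ (((hshift z hz).sub (hdiff z (hsub hz))).sub
      (hdir z hz)).differentiableWithinAt) fun z hz ↦ ?_
  exact norm_sub_sub_fderiv_le_of_lipschitzOnWith_fderiv (convex_ball c (r + δ)) hdiff hK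
    (hsub hz) (add_mem_ball_add hz hh)

theorem differentiableOn_fderiv [CompleteSpace F] (hU : IsOpen U)
    (hf : DifferentiableOn ℂ f U) : DifferentiableOn ℂ (fderiv ℂ f) U := by
  intro c hc
  have hdir := differentiableOn_fderiv_apply hU hf
  obtain ⟨ε, hε, hεU, K, hK⟩ := exists_ball_lipschitzOnWith_fderiv hU hf hc
  obtain ⟨B, hB⟩ := exists_clm_eq_fderiv_fderiv_apply (ball_mem_nhds c hε) hK
    fun h ↦ (hdir h).differentiableAt (hU.mem_nhds hc)
  rw [← add_halves ε] at hεU hK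
  have hremainder : (fun h ↦ fderiv ℂ f (c + h) - fderiv ℂ f c - B h) =O[𝓝 0]
      fun h ↦ ‖h‖ ^ 2 := by
    refine Asymptotics.IsBigO.of_bound (2 * K / (ε / 2)) ?_
    filter_upwards [ball_mem_nhds (0 : E) (half_pos hε)] with h hh
    rw [hB, norm_pow, norm_norm, div_mul_eq_mul_div, mul_assoc]
    exact norm_fderiv_add_sub_fderiv_sub_le (half_pos hε) (hf.mono hεU) ((hdir h).mono hεU) hK
      (mem_ball_zero_iff.1 hh)
  have hderiv : HasFDerivAt (fderiv ℂ f) B c :=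
    hasFDerivAt_iff_isLittleO_nhds_zero.2
      (hremainder.trans_isLittleO (Asymptotics.isLittleO_norm_pow_id one_lt_two))
  exact hderiv.differentiableAt.differentiableWithinAt

theorem isSymmSndFDerivAt_of_differentiableOn [CompleteSpace F] (hU : IsOpen U)
    (hf : DifferentiableOn ℂ f U) (hc : c ∈ U) : IsSymmSndFDerivAt ℂ f c :=
  second_derivative_symmetric_of_eventually
    (mem_of_superset (hU.mem_nhds hc) fun _ hw ↦
      (hf.differentiableAt (hU.mem_nhds hw)).hasFDerivAt)
    ((differentiableOn_fderiv hU hf).differentiableAt (hU.mem_nhds hc)).hasFDerivAt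

end Holomorphic

section Isotropic

variable {E M : Type*} [AddCommGroup E] [Module ℂ E] [AddCommGroup M] [Module ℂ M]

/-- The vector `½ (u - i v)`, which is isotropic when `u`, `v` are orthonormal. The pairs `(e₀, e₁)`
and `(e₂, e₃)` of coordinate vectors of `ℂ⁴` give the directions of `∂_{q₁}` and `∂_{q₂}`. -/
def isotropicVec (u v : E) : E := (2⁻¹ : ℂ) • (u - I • v)

/-- The vector `½ (u + i v)`, which is isotropic when `u`, `v` are orthonormal. The pairs `(e₀, e₁)`
and `(e₂, e₃)` of coordinate vectors of `ℂ⁴` give the directions of `∂_{q̃₁}` and `∂_{q̃₂}`. -/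
def conjIsotropicVec (u v : E) : E := (2⁻¹ : ℂ) • (u + I • v)

theorem apply_self_add_apply_self_eq_four_smul_isotropicVec (B : E →ₗ[ℂ] E →ₗ[ℂ] M) {u v : E}
    (hB : B u v = B v u) :
    B u u + B v v = (4 : ℂ) • B (isotropicVec u v) (conjIsotropicVec u v) := by
  simp only [isotropicVec, conjIsotropicVec, map_smul, map_sub, map_add, LinearMap.smul_apply,
    LinearMap.sub_apply, hB]
  match_scalars <;> grind [I_sq]

theorem sum_apply_self_eq_four_smul_isotropicVec (B : E →ₗ[ℂ] E →ₗ[ℂ] M) (hB : ∀ u v, B u v = B v u)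
    (e : Fin 4 → E) :
    ∑ i, B (e i) (e i) =
      (4 : ℂ) • (B (isotropicVec (e 0) (e 1)) (conjIsotropicVec (e 0) (e 1)) +
        B (isotropicVec (e 2) (e 3)) (conjIsotropicVec (e 2) (e 3))) := by
  rw [Fin.sum_univ_four, smul_add,
    ← apply_self_add_apply_self_eq_four_smul_isotropicVec B (hB _ _),
    ← apply_self_add_apply_self_eq_four_smul_isotropicVec B (hB _ _), ← add_assoc]

end Isotropic

theorem alpha_plane_representative_is_complex_harmonic_morphism_general {E 𝔸 : Type*}
    [NormedAddCommGroup E] [NormedSpace ℂ E] [NormedCommRing 𝔸] [NormedAlgebra ℂ 𝔸]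
    [CompleteSpace 𝔸] (e : Fin 4 → E) {U : Set E} (hU : IsOpen U) {f : E → 𝔸}
    (hf : DifferentiableOn ℂ f U)
    (h₁ : ∀ z ∈ U, fderiv ℂ f z (conjIsotropicVec (e 0) (e 1)) =
      f z * fderiv ℂ f z (isotropicVec (e 2) (e 3)))
    (h₂ : ∀ z ∈ U, fderiv ℂ f z (conjIsotropicVec (e 2) (e 3)) =
      -(f z * fderiv ℂ f z (isotropicVec (e 0) (e 1)))) :
    ∀ z ∈ U,
      (∑ i, fderiv ℂ (fun w ↦ fderiv ℂ f w (e i)) z (e i) = 0) ∧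
      (∑ i, fderiv ℂ f z (e i) ^ 2 = 0) := by
  intro z hz
  have hUz : U ∈ 𝓝 z := hU.mem_nhds hz
  have hf' : DifferentiableAt ℂ (fderiv ℂ f) z :=
    (differentiableOn_fderiv hU hf).differentiableAt hUz
  have hsymm : IsSymmSndFDerivAt ℂ f z := isSymmSndFDerivAt_of_differentiableOn hU hf hz
  constructor
  · simp only [fderiv_fderiv_apply_const hf']
    let B := (fderiv ℂ (fderiv ℂ f) z).toLinearMap₁₂
    have hB (u v : E) : B u v = fderiv ℂ (fderiv ℂ f) z u v := rfl
    have hsum := sum_apply_self_eq_four_smul_isotropicVec B hsymm e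
    simp only [hB] at hsum
    rw [hsum, fderiv_fderiv_add_eq_zero_of_eventually_eq_mul (hf.differentiableAt hUz) hf' hsymm
      (eventually_of_mem hUz h₁) (eventually_of_mem hUz h₂), smul_zero]
  · let B := (LinearMap.mul ℂ 𝔸).compl₁₂ (fderiv ℂ f z).toLinearMap (fderiv ℂ f z).toLinearMap
    have hB (u v : E) : B u v = fderiv ℂ f z u * fderiv ℂ f z v := rfl
    have hsum := sum_apply_self_eq_four_smul_isotropicVec B (fun u v ↦ mul_comm _ _) e
    simp only [hB, h₁ z hz, h₂ z hz] at hsum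
    simp only [sq, hsum, smul_eq_zero]
    right
    ring

/-- Proposition 7.2: a holomorphic map `μ` on an open subset of `ℂ⁴` satisfying the
`α`-plane integrability equations `∂_{q̃₁}μ − μ ∂_{q₂}μ = 0` and `∂_{q̃₂}μ + μ ∂_{q₁}μ = 0`
(with `∂_{q₁} = ½(∂_{z₀} − i∂_{z₁})`, `∂_{q̃₁} = ½(∂_{z₀} + i∂_{z₁})`, etc.)
is a complex-harmonic morphism: `∑ᵢ ∂²μ/∂zᵢ² = 0` and `∑ᵢ (∂μ/∂zᵢ)² = 0`. -/
theorem alpha_plane_representative_is_complex_harmonic_morphism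
    (A : Set (Fin 4 → ℂ)) (hA : IsOpen A)
    (μ : (Fin 4 → ℂ) → ℂ) (hμ : DifferentiableOn ℂ μ A)
    (heq1 : ∀ z ∈ A,
      (pdC 0 μ z + Complex.I * pdC 1 μ z) / 2
        - μ z * ((pdC 2 μ z - Complex.I * pdC 3 μ z) / 2) = 0)
    (heq2 : ∀ z ∈ A,
      (pdC 2 μ z + Complex.I * pdC 3 μ z) / 2
        + μ z * ((pdC 0 μ z - Complex.I * pdC 1 μ z) / 2) = 0) :
    ∀ z ∈ A,
      (∑ i : Fin 4, pdC i (pdC i μ) z = 0) ∧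
      (∑ i : Fin 4, (pdC i μ z) ^ 2 = 0) := by
  simp only [pdC] at heq1 heq2
  refine alpha_plane_representative_is_complex_harmonic_morphism_general
    (fun i ↦ Pi.single i 1) hA hμ (fun z hz ↦ ?_) fun z hz ↦ ?_
  · simp only [isotropicVec, conjIsotropicVec, map_smul, map_add, map_sub, smul_eq_mul]
    linear_combination heq1 z hz
  · simp only [isotropicVec, conjIsotropicVec, map_smul, map_add, map_sub, smul_eq_mul]
    linear_combination heq2 z hz

end
end

section
/- Let A be an open subset of ℂ⁴ and φ : A → ℂ holomorphic with ∑ᵢ₌₀³ ∂²φ/∂zᵢ² = 0 and ∑ᵢ₌₀³ (∂φ/∂zᵢ)² = 0 on A (a complex-harmonic morphism). Fix p = (p₀,p₁,p₂,p₃) ∈ ℂ⁴. Then: (a) the map χ, defined by χ(x₀,x₁,x₂,x₃) = φ(p₀+x₀, p₁+x₁, p₂+x₂, p₃+x₃) on the open set of real x where this is defined, satisfies ∑ᵢ₌₀³ ∂²χ/∂xᵢ² = 0 and ∑ᵢ₌₀³ (∂χ/∂xᵢ)² = 0; (b) the map ψ, defined by ψ(t,x₁,x₂,x₃) = φ(p₀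 − it, p₁+x₁, p₂+x₂, p₃+x₃) on the open set of real (t,x₁,x₂,x₃) where this is defined, satisfies −∂_t²ψ + ∂₁²ψ + ∂₂²ψ + ∂₃²ψ = 0 and −(∂_tψ)² + (∂₁ψ)² + (∂₂ψ)² + (∂₃ψ)² = 0. -/
noncomputable section

/-- Real partial derivative in the `i`-th coordinate direction of a map `ℝ⁴ → ℂ`. -/
def pd (i : Fin 4) (f : (Fin 4 → ℝ) → ℂ) (x : Fin 4 → ℝ) : ℂ :=
  fderiv ℝ f x (Pi.single i 1)

/-- The parametrization of the `ℝ⁴`-slice through `p ∈ ℂ⁴`: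
`x ↦ (p₀+x₀, p₁+x₁, p₂+x₂, p₃+x₃)`. -/
def embR (p : Fin 4 → ℂ) (x : Fin 4 → ℝ) : Fin 4 → ℂ := fun i => p i + (x i : ℂ)

/-- The parametrization of the Minkowski slice through `p ∈ ℂ⁴`:
`(t,x₁,x₂,x₃) ↦ (p₀ − it, p₁+x₁, p₂+x₂, p₃+x₃)` (here `t` is the coordinate of index `0`). -/
def embM (p : Fin 4 → ℂ) (x : Fin 4 → ℝ) : Fin 4 → ℂ :=
  fun i => if i = 0 then p 0 - Complex.I * (x 0 : ℂ) else p i + (x i : ℂ)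

/-! A holomorphic map `φ` is `C²`, so its restriction to a real affine slice `x ↦ p + (cᵢ xᵢ)ᵢ` has
`∂φ/∂xᵢ = cᵢ ∂φ/∂zᵢ` and `∂²φ/∂xᵢ² = cᵢ² ∂²φ/∂zᵢ²`: the complex metric `∑ dzᵢ²` pulls back to
`∑ cᵢ² dxᵢ²`, which is Euclidean for `c = (1, 1, 1, 1)` and Minkowski for `c = (-i, 1, 1, 1)`.

The analytic input is that a directional derivative of a holomorphic map is again holomorphic. The
Schwarz lemma of order two makes the difference quotients converge uniformly, and the Schwarz lemma
of order one shows that uniform limits of holomorphic maps are holomorphic.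
-/

open Filter Metric Set Topology

theorem exists_thickening_ball_subset_of_mem_nhds {X : Type*} [PseudoMetricSpace X] {x : X}
    {s : Set X} (hs : s ∈ 𝓝 x) : ∃ r > 0, thickening r (ball x r) ⊆ s := by
  obtain ⟨ε, hε, hball⟩ := Metric.mem_nhds_iff.mp hs
  refine ⟨ε / 2, half_pos hε, fun y hy => hball ?_⟩
  obtain ⟨z, hz, hyz⟩ := mem_thickening_iff.mp hy
  rw [mem_ball] at hz ⊢
  linarith [dist_triangle y z x]

theorem eventually_norm_smul_lt {𝕜 G : Type*} [NormedField 𝕜] [SeminormedAddCommGroup G]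
    [NormedSpace 𝕜 G] (v : G) {r : ℝ} (hr : 0 < r) : ∀ᶠ h : 𝕜 in 𝓝 0, ‖h • v‖ < r :=
  ContinuousAt.eventually_lt (by fun_prop) continuousAt_const (by simpa)

section HolomorphicDirectionalDerivative

variable {E F : Type*} [NormedAddCommGroup E] [NormedSpace ℂ E] [NormedAddCommGroup F]
  [NormedSpace ℂ F]

theorem norm_sub_sub_fderiv_le_of_mapsTo_ball {f : E → F} {c z : E} {R M : ℝ}
    (hf : DifferentiableOn ℂ f (ball c R)) (hmaps : MapsTo f (ball c R) (closedBall (f c) M))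
    (hz : z ∈ ball c R) :
    ‖f z - f c - fderiv ℂ f c (z - c)‖ ≤ 2 * M * (‖z - c‖ / R) ^ 2 := by
  have hR : 0 < R := nonempty_ball.mp ⟨z, hz⟩
  set g : E → F := fun w => f w - f c - fderiv ℂ f c (w - c) with hg
  have hgc : g c = 0 := by simp [hg]
  have hg_diff : DifferentiableOn ℂ g (ball c R) := by fun_prop
  have hg_maps : MapsTo g (ball c R) (closedBall (g c) (2 * M)) := by
    intro w hw
    have hfw : ‖f w - f c‖ ≤ M := mem_closedBall_iff_norm.mp (hmaps hw)
    have hderiv : ‖fderiv ℂ f c (w - c)‖ ≤ M :=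
      calc ‖fderiv ℂ f c (w - c)‖ ≤ M / R * R :=
            ContinuousLinearMap.le_of_opNorm_le_of_le _
              (Complex.norm_fderiv_le_div_of_mapsTo_ball hf hmaps hR) (mem_ball_iff_norm.mp hw).le
        _ = M := div_mul_cancel₀ M hR.ne'
    rw [hgc, mem_closedBall_zero_iff]
    linarith [norm_sub_le (f w - f c) (fderiv ℂ f c (w - c))]
  have hg_isLittleO : (g · - g c) =o[𝓝 c] fun w => ‖w - c‖ ^ 1 := by
    simpa only [hgc, sub_zero, pow_one, Asymptotics.isLittleO_norm_right] using
      (hf.differentiableAt (ball_mem_nhds c hR)).hasFDerivAt.isLittleO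
  simpa only [hgc, sub_zero, dist_eq_norm, one_add_one_eq_two] using
    Complex.dist_le_mul_div_pow_of_mapsTo_ball_of_isLittleO hg_diff hg_maps hg_isLittleO hz

theorem norm_inv_smul_sub_fderiv_le_of_mapsTo_ball {f : E → F} {z v : E} {R M : ℝ} {h : ℂ}
    (hf : DifferentiableOn ℂ f (ball z R)) (hmaps : MapsTo f (ball z R) (closedBall (f z) M))
    (hh : h ≠ 0) (hhv : ‖h • v‖ < R) :
    ‖h⁻¹ • (f (z + h • v) - f z) - fderiv ℂ f z v‖ ≤ 2 * M * (‖v‖ / R) ^ 2 * ‖h‖ := by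
  have htaylor : ‖f (z + h • v) - f z - h • fderiv ℂ f z v‖ ≤ 2 * M * (‖h • v‖ / R) ^ 2 := by
    simpa using norm_sub_sub_fderiv_le_of_mapsTo_ball hf hmaps (z := z + h • v) (by simpa using hhv)
  calc ‖h⁻¹ • (f (z + h • v) - f z) - fderiv ℂ f z v‖
      = ‖h‖⁻¹ * ‖f (z + h • v) - f z - h • fderiv ℂ f z v‖ := by
        rw [← norm_inv, ← norm_smul, smul_sub _ _ (h • _), inv_smul_smul₀ hh]
    _ ≤ ‖h‖⁻¹ * (2 * M * (‖h • v‖ / R) ^ 2) := by gcongr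
    _ = 2 * M * (‖v‖ / R) ^ 2 * ‖h‖ := by
        rw [norm_smul]
        field_simp [norm_ne_zero_iff.mpr hh]

theorem tendstoUniformlyOn_inv_smul_sub_fderiv {f : E → F} {s : Set E} {δ M : ℝ} (hδ : 0 < δ)
    (hf : DifferentiableOn ℂ f (thickening δ s)) (hM : ∀ w ∈ thickening δ s, ‖f w‖ ≤ M) (v : E) :
    TendstoUniformlyOn (fun (h : ℂ) z => h⁻¹ • (f (z + h • v) - f z)) (fun z => fderiv ℂ f z v)
      (𝓝[≠] 0) s := by
  rw [Metric.tendstoUniformlyOn_iff]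
  intro ε hε
  have hrate : ∀ᶠ h : ℂ in 𝓝[≠] 0, 2 * (2 * M) * (‖v‖ / δ) ^ 2 * ‖h‖ < ε :=
    nhdsWithin_le_nhds <| ContinuousAt.eventually_lt (by fun_prop) continuousAt_const (by simpa)
  filter_upwards [nhdsWithin_le_nhds (eventually_norm_smul_lt v hδ), hrate,
    self_mem_nhdsWithin] with h hhv hhε hh z hz
  have hball : ball z δ ⊆ thickening δ s := ball_subset_thickening hz δ
  have hmaps : MapsTo f (ball z δ) (closedBall (f z) (2 * M)) := fun w hw => by
    rw [mem_closedBall_iff_norm]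
    linarith [norm_sub_le (f w) (f z), hM w (hball hw), hM z (hball (mem_ball_self hδ))]
  rw [dist_comm, dist_eq_norm]
  exact (norm_inv_smul_sub_fderiv_le_of_mapsTo_ball (hf.mono hball) hmaps hh hhv).trans_lt hhε

theorem uniformCauchySeqOn_fderiv_of_thickening {ι : Type*} {l : Filter ι} {f : ι → E → F}
    {s : Set E} {δ : ℝ} (hδ : 0 < δ) (hf : ∀ᶠ n in l, DifferentiableOn ℂ (f n) (thickening δ s))
    (hcauchy : UniformCauchySeqOn f l (thickening δ s)) :
    UniformCauchySeqOn (fun n => fderiv ℂ (f n)) l s := by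
  intro u hu
  obtain ⟨ε, hε, hεu⟩ := Metric.mem_uniformity_dist.mp hu
  filter_upwards [hcauchy _ (Metric.dist_mem_uniformity (by positivity : 0 < ε * δ / 4)),
    hf.prod_mk hf] with ⟨m, n⟩ hclose ⟨hm, hn⟩ x hx
  have hball : ball x δ ⊆ thickening δ s := ball_subset_thickening hx δ
  have hsub_le : ∀ y ∈ ball x δ, ‖f m y - f n y‖ ≤ ε * δ / 4 := fun y hy => by
    simpa only [dist_eq_norm] using (hclose y (hball hy)).le
  have hmaps : MapsTo (f m - f n) (ball x δ) (closedBall ((f m - f n) x) (ε * δ / 2)) :=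
    fun y hy => by
      rw [mem_closedBall_iff_norm, Pi.sub_apply, Pi.sub_apply]
      linarith [norm_sub_le (f m y - f n y) (f m x - f n x), hsub_le y hy,
        hsub_le x (mem_ball_self hδ)]
  have hnhds : thickening δ s ∈ 𝓝 x := mem_of_superset (ball_mem_nhds x hδ) hball
  apply hεu
  calc dist (fderiv ℂ (f m) x) (fderiv ℂ (f n) x) = ‖fderiv ℂ (f m - f n) x‖ := by
        rw [dist_eq_norm, fderiv_sub (hm.differentiableAt hnhds) (hn.differentiableAt hnhds)]
    _ ≤ ε * δ / 2 / δ :=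
        Complex.norm_fderiv_le_div_of_mapsTo_ball ((hm.sub hn).mono hball) hmaps hδ
    _ = ε / 2 := by field_simp
    _ < ε := half_lt_self hε

variable [CompleteSpace F]

theorem differentiableOn_of_tendstoUniformlyOn_s8 {ι : Type*} {l : Filter ι} [l.NeBot]
    {f : ι → E → F} {g : E → F} {s : Set E} (hs : IsOpen s)
    (hf : ∀ᶠ n in l, DifferentiableOn ℂ (f n) s) (hlim : TendstoUniformlyOn f g l s) :
    DifferentiableOn ℂ g s := by
  intro x hx
  obtain ⟨r, hr, hsub⟩ := exists_thickening_ball_subset_of_mem_nhds (hs.mem_nhds hx)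
  have hcauchy : UniformCauchySeqOn (fun n => fderiv ℂ (f n)) l (ball x r) :=
    uniformCauchySeqOn_fderiv_of_thickening hr (hf.mono fun n hn => hn.mono hsub)
      (hlim.uniformCauchySeqOn.mono hsub)
  choose! g' hg' using fun y (hy : y ∈ ball x r) => CompleteSpace.complete (hcauchy.cauchy_map hy)
  have hderiv_lim : TendstoUniformlyOnFilter (fun n => fderiv ℂ (f n)) g' l (𝓝 x) :=
    (hcauchy.tendstoUniformlyOn_of_tendsto hg').tendstoUniformlyOnFilter.mono_right
      (le_principal_iff.mpr (ball_mem_nhds x hr))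
  have hderiv : ∀ᶠ n : ι × E in l ×ˢ 𝓝 x, HasFDerivAt (f n.1) (fderiv ℂ (f n.1) n.2) n.2 := by
    filter_upwards [hf.prod_mk (hs.mem_nhds hx)] with n ⟨hn, hmem⟩
    exact (hn.differentiableAt (hs.mem_nhds hmem)).hasFDerivAt
  have hpointwise : ∀ᶠ y in 𝓝 x, Tendsto (fun n => f n y) l (𝓝 (g y)) :=
    (hs.eventually_mem hx).mono fun y hy => hlim.tendsto_at hy
  exact (hasFDerivAt_of_tendstoUniformlyOnFilter hderiv_lim hderiv
    hpointwise).differentiableAt.differentiableWithinAt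

theorem differentiableOn_fderiv_apply_of_isOpen {f : E → F} {s : Set E} (hs : IsOpen s)
    (hf : DifferentiableOn ℂ f s) (v : E) : DifferentiableOn ℂ (fun z => fderiv ℂ f z v) s := by
  intro x hx
  have hbounded : ∀ᶠ y in 𝓝 x, ‖f y‖ < ‖f x‖ + 1 :=
    (hf.differentiableAt (hs.mem_nhds hx)).continuousAt.norm.eventually_lt_const (lt_add_one _)
  obtain ⟨r, hr, hsub⟩ :=
    exists_thickening_ball_subset_of_mem_nhds (inter_mem (hs.mem_nhds hx) hbounded)
  have hf_thickening : DifferentiableOn ℂ f (thickening r (ball x r)) :=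
    hf.mono fun y hy => (hsub hy).1
  have hquotient : ∀ᶠ h : ℂ in 𝓝[≠] 0,
      DifferentiableOn ℂ (fun z => h⁻¹ • (f (z + h • v) - f z)) (ball x r) := by
    filter_upwards [nhdsWithin_le_nhds (eventually_norm_smul_lt v hr)] with h hh
    have hshift : MapsTo (fun z => z + h • v) (ball x r) (thickening r (ball x r)) := fun z hz =>
      ball_subset_thickening hz r (by simpa using hh)
    exact ((hf_thickening.comp (by fun_prop) hshift).sub
      (hf_thickening.mono (self_subset_thickening hr _))).const_smul h⁻¹
  have hball : DifferentiableOn ℂ (fun z => fderiv ℂ f z v) (ball x r) :=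
    differentiableOn_of_tendstoUniformlyOn_s8 isOpen_ball hquotient
      (tendstoUniformlyOn_inv_smul_sub_fderiv hr hf_thickening (fun y hy => (hsub hy).2.le) v)
  exact (hball.differentiableAt (ball_mem_nhds x hr)).differentiableWithinAt

end HolomorphicDirectionalDerivative

section ComplexDerivativeAlongRealSlice

variable {V E F : Type*} [NormedAddCommGroup V] [NormedSpace ℝ V] [NormedAddCommGroup E]
  [NormedSpace ℂ E] [NormedSpace ℝ E] [IsScalarTower ℝ ℂ E] [NormedAddCommGroup F]
  [NormedSpace ℂ F] [NormedSpace ℝ F] [IsScalarTower ℝ ℂ F]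

theorem fderiv_comp_const_add_apply {f : E → F} {p : E} {L : V →L[ℝ] E} {x : V}
    (hf : DifferentiableAt ℂ f (p + L x)) (v : V) :
    fderiv ℝ (f ∘ (p + L ·)) x v = fderiv ℂ f (p + L x) (L v) := by
  rw [((hf.hasFDerivAt.restrictScalars ℝ).comp x (L.hasFDerivAt.const_add p)).fderiv]
  rfl

theorem fderiv_fderiv_comp_const_add_apply [CompleteSpace F] {f : E → F} {s : Set E}
    (hs : IsOpen s) (hf : DifferentiableOn ℂ f s) {p : E} {L : V →L[ℝ] E} {x : V}
    (hx : p + L x ∈ s) (v w : V) :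
    fderiv ℝ (fun y => fderiv ℝ (f ∘ (p + L ·)) y v) x w =
      fderiv ℂ (fun z => fderiv ℂ f z (L v)) (p + L x) (L w) := by
  have hderiv : (fun y => fderiv ℝ (f ∘ (p + L ·)) y v) =ᶠ[𝓝 x]
      (fun z => fderiv ℂ f z (L v)) ∘ (p + L ·) := by
    have hmem : ∀ᶠ y in 𝓝 x, p + L y ∈ s :=
      (L.continuous.const_add p).continuousAt.eventually_mem (hs.mem_nhds hx)
    filter_upwards [hmem] with y hy
    exact fderiv_comp_const_add_apply (hf.differentiableAt (hs.mem_nhds hy)) v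
  rw [hderiv.fderiv_eq]
  exact fderiv_comp_const_add_apply
    ((differentiableOn_fderiv_apply_of_isOpen hs hf (L v)).differentiableAt (hs.mem_nhds hx)) w

end ComplexDerivativeAlongRealSlice

section DiagonalSlice

/-- The real-linear map `x ↦ (cᵢ xᵢ)ᵢ` from `ℝⁿ` to `ℂⁿ`. Its translates by `p` parametrize the
slices of `ℂⁿ`: `cᵢ = 1` gives a real direction and `cᵢ = -i` a time direction. -/
def realDiagonal {ι : Type*} (c : ι → ℂ) : (ι → ℝ) →L[ℝ] (ι → ℂ) :=
  ContinuousLinearMap.piMap fun i => c i • Complex.ofRealCLM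

theorem realDiagonal_apply {ι : Type*} (c : ι → ℂ) (x : ι → ℝ) (i : ι) :
    realDiagonal c x i = c i * x i := by
  simp [realDiagonal]

theorem realDiagonal_single {ι : Type*} [DecidableEq ι] (c : ι → ℂ) (i : ι) :
    realDiagonal c (Pi.single i 1) = c i • Pi.single i 1 := by
  ext j
  obtain rfl | hij := eq_or_ne j i <;> simp [realDiagonal_apply, *]

theorem embR_eq_add_realDiagonal (p : Fin 4 → ℂ) : embR p = (p + realDiagonal 1 ·) := by
  ext x i
  simp [embR, realDiagonal_apply]

theorem embM_eq_add_realDiagonal (p : Fin 4 → ℂ) :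
    embM p = (p + realDiagonal ![-Complex.I, 1, 1, 1] ·) := by
  ext x i
  fin_cases i <;> simp [embM, realDiagonal_apply, sub_eq_add_neg]

variable {φ : (Fin 4 → ℂ) → ℂ} {c ε : Fin 4 → ℂ} {p : Fin 4 → ℂ} {x : Fin 4 → ℝ}

theorem pd_comp_add_realDiagonal (hφ : DifferentiableAt ℂ φ (p + realDiagonal c x)) (i : Fin 4) :
    pd i (φ ∘ (p + realDiagonal c ·)) x = c i * pdC i φ (p + realDiagonal c x) := by
  rw [pd, fderiv_comp_const_add_apply hφ, realDiagonal_single, map_smul, smul_eq_mul, pdC]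

theorem pd_pd_comp_add_realDiagonal {A : Set (Fin 4 → ℂ)} (hA : IsOpen A)
    (hφ : DifferentiableOn ℂ φ A) (hx : p + realDiagonal c x ∈ A) (i : Fin 4) :
    pd i (pd i (φ ∘ (p + realDiagonal c ·))) x =
      c i ^ 2 * pdC i (pdC i φ) (p + realDiagonal c x) := by
  have hscale : (fun z => fderiv ℂ φ z (c i • Pi.single i 1)) = c i • pdC i φ := by
    ext z
    exact map_smul _ _ _
  calc pd i (pd i (φ ∘ (p + realDiagonal c ·))) x
      = fderiv ℂ (c i • pdC i φ) (p + realDiagonal c x) (c i • Pi.single i 1) := by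
        rw [← hscale, ← realDiagonal_single]
        exact fderiv_fderiv_comp_const_add_apply hA hφ hx _ _
    _ = c i ^ 2 * pdC i (pdC i φ) (p + realDiagonal c x) := by
        rw [fderiv_const_smul_field, map_smul, Pi.smul_apply, smul_apply, smul_smul, ← sq,
          smul_eq_mul, pdC]

theorem sum_mul_sq_pd_comp_add_realDiagonal (hφ : DifferentiableAt ℂ φ (p + realDiagonal c x))
    (hε : ∀ i, ε i * c i ^ 2 = 1) :
    ∑ i, ε i * pd i (φ ∘ (p + realDiagonal c ·)) x ^ 2 =
      ∑ i, pdC i φ (p + realDiagonal c x) ^ 2 := by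
  refine Finset.sum_congr rfl fun i _ => ?_
  rw [pd_comp_add_realDiagonal hφ, mul_pow, ← mul_assoc, hε, one_mul]

theorem sum_mul_pd_pd_comp_add_realDiagonal {A : Set (Fin 4 → ℂ)} (hA : IsOpen A)
    (hφ : DifferentiableOn ℂ φ A) (hx : p + realDiagonal c x ∈ A)
    (hε : ∀ i, ε i * c i ^ 2 = 1) :
    ∑ i, ε i * pd i (pd i (φ ∘ (p + realDiagonal c ·))) x =
      ∑ i, pdC i (pdC i φ) (p + realDiagonal c x) := by
  refine Finset.sum_congr rfl fun i _ => ?_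
  rw [pd_pd_comp_add_realDiagonal hA hφ hx, ← mul_assoc, hε, one_mul]

end DiagonalSlice

/-- Proposition 7.3(i): a complex-harmonic morphism on an open subset of `ℂ⁴` restricts to a
harmonic morphism on each `ℝ⁴`-slice and to a harmonic morphism on each Minkowski slice. -/
theorem complex_harmonic_morphism_restricts_to_slices
    (A : Set (Fin 4 → ℂ)) (hA : IsOpen A)
    (φ : (Fin 4 → ℂ) → ℂ) (hφ : DifferentiableOn ℂ φ A)
    (hlap : ∀ z ∈ A, ∑ i : Fin 4, pdC i (pdC i φ) z = 0)
    (hconf : ∀ z ∈ A, ∑ i : Fin 4, (pdC i φ z) ^ 2 = 0)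
    (p : Fin 4 → ℂ) :
    (∀ x : Fin 4 → ℝ, embR p x ∈ A →
      (∑ i : Fin 4, pd i (pd i (φ ∘ embR p)) x = 0) ∧
      (∑ i : Fin 4, (pd i (φ ∘ embR p) x) ^ 2 = 0)) ∧
    (∀ x : Fin 4 → ℝ, embM p x ∈ A →
      (-(pd 0 (pd 0 (φ ∘ embM p)) x) + pd 1 (pd 1 (φ ∘ embM p)) x
          + pd 2 (pd 2 (φ ∘ embM p)) x + pd 3 (pd 3 (φ ∘ embM p)) x = 0) ∧
      (-((pd 0 (φ ∘ embM p) x) ^ 2) + (pd 1 (φ ∘ embM p) x) ^ 2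
          + (pd 2 (φ ∘ embM p) x) ^ 2 + (pd 3 (φ ∘ embM p) x) ^ 2 = 0)) := by
  refine ⟨fun x hx => ?_, fun x hx => ?_⟩
  · rw [embR_eq_add_realDiagonal] at hx ⊢
    have hε : ∀ i : Fin 4, (1 : Fin 4 → ℂ) i * (1 : Fin 4 → ℂ) i ^ 2 = 1 := by simp
    have hharm := (sum_mul_pd_pd_comp_add_realDiagonal hA hφ hx hε).trans (hlap _ hx)
    have hconformal := (sum_mul_sq_pd_comp_add_realDiagonal
      (hφ.differentiableAt (hA.mem_nhds hx)) hε).trans (hconf _ hx)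
    exact ⟨by simpa using hharm, by simpa using hconformal⟩
  · rw [embM_eq_add_realDiagonal] at hx ⊢
    have hε : ∀ i : Fin 4, (![-1, 1, 1, 1] : Fin 4 → ℂ) i *
        (![-Complex.I, 1, 1, 1] : Fin 4 → ℂ) i ^ 2 = 1 := by
      simp [Fin.forall_fin_succ]
    have hwave := (sum_mul_pd_pd_comp_add_realDiagonal hA hφ hx hε).trans (hlap _ hx)
    have hconformal := (sum_mul_sq_pd_comp_add_realDiagonal
      (hφ.differentiableAt (hA.mem_nhds hx)) hε).trans (hconf _ hx)
    exact ⟨by simpa [Fin.sum_univ_four] using hwave, by simpa [Fin.sum_univ_four] using hconformal⟩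

end
end
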